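/- Let w' ≥ 1, j ≥ 1, and t ≥ 0. Let λ' and μ' be partitions of w' such that all parts of λ' are divisible by p^t. Set w = w'·p^j, λ = p^j·λ', and μ = p^j*μ'. Then for every n ≥ w one has d_{λμ} ≡ d_{λ'μ'} (mod p^{t+1}). -/

import Mathlib

/-!
The dual Cauchy identity `∏ (1 + x_i y_k) = ∑ m_μ(x) e_μ(y)`, together with its mirror image
obtained by exchanging `x` and `y`, shows that the matrix `d` is symmetric: `d_{λμ}` is also the
coefficient of `e_μ` in `m_λ`. This turns the parts of `λ`, which are multiplied by powers of `p`,
into exponents of the `x_i`, and the repetition of `μ` into a multiplication of exponents of the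
`e_i`.

On `ℤ[e_1, …, e_N]` there are two lifts of Frobenius, `φ : f(x) ↦ f(x^p)`, under which `m_κ` goes
to `m_{p·κ}`, and `σ : e_i ↦ e_i^p`. They agree modulo `p`, and hence `φ^{s+1} ≡ σ φ^s` modulo
`p^{s+1}` for every `s`. For `λ' = p^t·κ` one applies this to `m_κ` with `s = t, …, t + j - 1`,
since `σ` moves the coefficient of `e_μ` to `e_{p*μ}`.
-/

open scoped Classical

/-- The monomial symmetric polynomial in `n` variables associated to the partition
(multiset of positive integers) `μ`: the sum of all distinct monomials whose multiset of
nonzero exponents equals `μ`. -/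
noncomputable def msymmM (n : ℕ) (R : Type) [CommSemiring R] (μ : Multiset ℕ) :
    MvPolynomial (Fin n) R :=
  ∑ d : Fin n → Fin (μ.sum + 1),
    if (Multiset.map (fun i => (d i : ℕ)) Finset.univ.val).filter (· ≠ 0) = μ then
      MvPolynomial.monomial (Finsupp.equivFunOnFinite.symm fun i => (d i : ℕ)) (1 : R)
    else 0

/-- The exponent vector of the monomial `X_{λ₁}⋯X_{λₖ}` associated to a partition
`lam = {λ₁,…,λₖ}` with parts ≤ n; the variable `X_m` corresponds to the index `m - 1`. -/
noncomputable def expOf (n : ℕ) (lam : Multiset ℕ) : Fin n →₀ ℕ :=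
  Finsupp.equivFunOnFinite.symm fun i : Fin n => lam.count ((i : ℕ) + 1)

section

open MvPolynomial Finset

/-! ### Monomial symmetric polynomials -/

/-- The multiset of nonzero values of `d`. For an exponent vector `d` this is the partition `μ` such
that the monomial `X^d` occurs in `m_μ`. -/
def shape {ι : Type*} [Fintype ι] (d : ι → ℕ) : Multiset ℕ :=
  (Multiset.map d univ.val).filter (· ≠ 0)

theorem mem_shape {ι : Type*} [Fintype ι] {d : ι → ℕ} {i : ℕ} :
    i ∈ shape d ↔ (∃ k, d k = i) ∧ i ≠ 0 := by
  simp [shape]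

theorem shape_comp_equiv {ι κ : Type*} [Fintype ι] [Fintype κ] (d : κ → ℕ) (e : ι ≃ κ) :
    shape (d ∘ e) = shape d := by
  rw [shape, ← Multiset.map_map, Multiset.map_univ_val_equiv e, shape]

theorem shape_smul {ι : Type*} [Fintype ι] {q : ℕ} (hq : q ≠ 0) (d : ι → ℕ) :
    shape (q • d) = (shape d).map (q * ·) := by
  simp [shape, Multiset.filter_map, hq]

theorem prod_map_shape {ι M : Type*} [Fintype ι] [CommMonoid M] {f : ℕ → M} (hf : f 0 = 1)
    (d : ι → ℕ) : ((shape d).map f).prod = ∏ i, f (d i) := by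
  rw [shape, Multiset.filter_map, Multiset.map_map]
  refine prod_filter_of_ne (p := fun i => d i ≠ 0) (f := f ∘ d) fun i _ hi h => hi ?_
  rw [Function.comp_apply, h, hf]

/-- The partitions with at most `n` parts, all of them at most `N`. -/
noncomputable def boxPartitions (n N : ℕ) : Finset (Multiset ℕ) :=
  (Fintype.piFinset fun _ : Fin n => range (N + 1)).image shape

theorem pos_and_le_of_mem_boxPartitions {n N : ℕ} {μ : Multiset ℕ} (hμ : μ ∈ boxPartitions n N) :
    ∀ i ∈ μ, 0 < i ∧ i ≤ N := by
  obtain ⟨d, hd, rfl⟩ := mem_image.1 hμ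
  intro i hi
  obtain ⟨⟨k, rfl⟩, hk⟩ := mem_shape.1 hi
  exact ⟨Nat.pos_of_ne_zero hk, Nat.lt_succ_iff.1 (mem_range.1 (Fintype.mem_piFinset.1 hd k))⟩

section Monomial

variable {n : ℕ} {R : Type} [CommSemiring R]

theorem msymmM_eq_sum {N : ℕ} {μ : Multiset ℕ} (hμ : ∀ i ∈ μ, i ≤ N) :
    msymmM n R μ = ∑ d ∈ Fintype.piFinset fun _ : Fin n => range (N + 1) with shape d = μ,
      monomial (Finsupp.equivFunOnFinite.symm d) 1 := by
  have le_of_shape : ∀ {M : ℕ} {d : Fin n → ℕ}, (∀ i ∈ μ, i ≤ M) → shape d = μ → ∀ k, d k ≤ M := by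
    rintro M d hM rfl k
    by_cases hk : d k = 0
    · exact hk ▸ M.zero_le
    · exact hM _ (mem_shape.2 ⟨⟨k, rfl⟩, hk⟩)
  rw [msymmM, ← sum_filter]
  refine sum_nbij (fun d k => (d k : ℕ)) (fun d hd => ?_) (fun d _ d' _ h => ?_) (fun d hd => ?_)
    fun _ _ => rfl
  · have hd : shape (fun k => (d k : ℕ)) = μ := (mem_filter.1 hd).2
    simpa [Nat.lt_succ_iff, hd] using le_of_shape hμ hd
  · exact funext fun k => Fin.ext (congrFun h k)
  · have hd : shape d = μ := (mem_filter.1 hd).2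
    have hle := le_of_shape (fun i hi => Multiset.le_sum_of_mem hi) hd
    exact ⟨fun k => ⟨d k, Nat.lt_succ_iff.2 (hle k)⟩, mem_filter.2 ⟨mem_univ _, hd⟩, rfl⟩

theorem msymmM_eq_zero_of_notMem_boxPartitions {N : ℕ} {μ : Multiset ℕ} (hμ : ∀ i ∈ μ, i ≤ N)
    (h : μ ∉ boxPartitions n N) : msymmM n R μ = 0 := by
  rw [msymmM_eq_sum hμ, filter_false_of_mem, sum_empty]
  rintro d hd rfl
  exact h (mem_image_of_mem _ hd)

theorem coeff_msymmM (μ : Multiset ℕ) (d : Fin n →₀ ℕ) :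
    coeff d (msymmM n R μ) = if shape d = μ then 1 else 0 := by
  rw [msymmM_eq_sum (N := μ.sum + ∑ i, d i)
    fun i hi => (Multiset.le_sum_of_mem hi).trans (Nat.le_add_right _ _), coeff_sum]
  have hd : ∀ i, d i ≤ μ.sum + ∑ i, d i := fun i =>
    (single_le_sum (fun _ _ => Nat.zero_le _) (mem_univ i)).trans (Nat.le_add_left _ _)
  simp only [coeff_monomial, Equiv.symm_apply_eq]
  simp [sum_ite_eq', hd, Finsupp.equivFunOnFinite]

theorem msymmM_isSymmetric (μ : Multiset ℕ) : (msymmM n R μ).IsSymmetric := by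
  intro e
  ext d
  obtain ⟨d, rfl⟩ := (Finsupp.mapDomain_surjective e.surjective) d
  have hd : d.mapDomain e ∘ e = d := funext (Finsupp.mapDomain_apply e.injective d)
  rw [coeff_rename_mapDomain _ e.injective, coeff_msymmM, coeff_msymmM, ← hd, shape_comp_equiv]

theorem expand_msymmM {q : ℕ} (hq : q ≠ 0) (μ : Multiset ℕ) :
    expand q (msymmM n R μ) = msymmM n R (μ.map (q * ·)) := by
  ext d
  by_cases h : ∀ i, q ∣ d i
  · obtain ⟨c, rfl⟩ : ∃ c : Fin n →₀ ℕ, d = q • c := by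
      choose c hc using h
      exact ⟨Finsupp.equivFunOnFinite.symm c, Finsupp.ext hc⟩
    have hinj : Function.Injective (q * · : ℕ → ℕ) := mul_right_injective₀ hq
    simp only [coeff_expand_smul _ hq, coeff_msymmM, Finsupp.coe_smul, shape_smul hq,
      (Multiset.map_injective hinj).eq_iff]
  · obtain ⟨i, hi⟩ := not_forall.1 h
    rw [coeff_expand_of_not_dvd _ hi, coeff_msymmM, if_neg]
    intro hd
    have hmem : d i ∈ shape d := mem_shape.2 ⟨⟨i, rfl⟩, fun h0 => hi (h0 ▸ dvd_zero q)⟩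
    obtain ⟨a, -, ha⟩ := Multiset.mem_map.1 (hd ▸ hmem)
    exact hi ⟨a, ha.symm⟩

end Monomial

/-! ### The coordinates `e_1, …, e_n` -/

/-- The substitution `X_i ↦ e_{i+1}`. It is `MvPolynomial.esymmAlgHom` with values in all
polynomials instead of the subalgebra of symmetric ones. -/
noncomputable def esymmHom (n : ℕ) (R : Type*) [CommSemiring R] :
    MvPolynomial (Fin n) R →ₐ[R] MvPolynomial (Fin n) R :=
  aeval fun i : Fin n => esymm (Fin n) R (i + 1)

theorem esymmHom_eq_esymmAlgHom (n : ℕ) (R : Type*) [CommRing R] (f : MvPolynomial (Fin n) R) :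
    esymmHom n R f = (esymmAlgHom (Fin n) R n f : MvPolynomial (Fin n) R) :=
  (esymmAlgHom_apply f).symm

theorem esymmHom_injective (n : ℕ) (R : Type*) [CommRing R] :
    Function.Injective (esymmHom n R) := by
  intro f g h
  rw [esymmHom_eq_esymmAlgHom, esymmHom_eq_esymmAlgHom] at h
  exact esymmAlgHom_fin_injective R le_rfl (Subtype.ext h)

theorem exists_esymmHom_eq {n : ℕ} {R : Type*} [CommRing R] {f : MvPolynomial (Fin n) R}
    (hf : f.IsSymmetric) : ∃ g, esymmHom n R g = f := by
  obtain ⟨g, hg⟩ := esymmAlgHom_fin_surjective R (le_refl n) ⟨f, hf⟩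
  exact ⟨g, by rw [esymmHom_eq_esymmAlgHom, hg]⟩

theorem map_esymmHom {n : ℕ} {R S : Type*} [CommSemiring R] [CommSemiring S] (φ : R →+* S)
    (f : MvPolynomial (Fin n) R) : map φ (esymmHom n R f) = esymmHom n S (map φ f) := by
  simp only [esymmHom, aeval_eq_bind₁, map_bind₁, map_esymm]

theorem expOf_nsmul (n k : ℕ) (μ : Multiset ℕ) : expOf n (k • μ) = k • expOf n μ := by
  ext i
  simp [expOf]

theorem expOf_injOn (n : ℕ) : Set.InjOn (expOf n) {μ | ∀ i ∈ μ, 0 < i ∧ i ≤ n} := by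
  intro μ hμ ν hν h
  ext k
  by_cases hk : 0 < k ∧ k ≤ n
  · have := DFunLike.congr_fun h ⟨k - 1, by omega⟩
    simpa [expOf, Nat.sub_add_cancel hk.1] using this
  · rw [Multiset.count_eq_zero_of_notMem (hk <| hμ k ·),
      Multiset.count_eq_zero_of_notMem (hk <| hν k ·)]

theorem esymmHom_monomial_expOf {n : ℕ} (R : Type*) [CommSemiring R] {μ : Multiset ℕ}
    (hμ : ∀ i ∈ μ, 0 < i ∧ i ≤ n) :
    esymmHom n R (monomial (expOf n μ) 1) = (μ.map (esymm (Fin n) R)).prod := by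
  have hsub : μ.toFinset ⊆ Ico (0 + 1) (n + 1) := fun i hi =>
    have := hμ i (Multiset.mem_toFinset.1 hi)
    mem_Ico.2 ⟨this.1, Nat.lt_succ_iff.2 this.2⟩
  rw [prod_multiset_map_count, prod_subset hsub fun i _ hi => by
    rw [Multiset.count_eq_zero_of_notMem (hi <| Multiset.mem_toFinset.2 ·), pow_zero],
    ← prod_Ico_add', ← range_eq_Ico, ← Fin.prod_univ_eq_prod_range
      (fun i => esymm (Fin n) R (i + 1) ^ μ.count (i + 1)),
    esymmHom, aeval_monomial, map_one, one_mul, Finsupp.prod_fintype _ _ fun _ => pow_zero _]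
  rfl

/-! ### The dual Cauchy identity -/

theorem aeval_C_comp_X {σ τ R : Type*} [CommSemiring R] (f : MvPolynomial σ R) :
    aeval (fun i => (C (X i) : MvPolynomial τ (MvPolynomial σ R))) f = C f := by
  induction f using MvPolynomial.induction_on with
  | C r => rw [aeval_C, MvPolynomial.algebraMap_apply, algebraMap_eq]
  | add f g hf hg => rw [map_add, map_add, hf, hg]
  | mul_X f i hf => rw [map_mul, map_mul, hf, aeval_X]

theorem aeval_X_eq_map {σ R A : Type*} [CommSemiring R] [CommSemiring A] [Algebra R A]
    (f : MvPolynomial σ R) : aeval (X : σ → MvPolynomial σ A) f = map (algebraMap R A) f := by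
  rw [← aeval_map_algebraMap A, aeval_X_left_apply]

theorem prod_one_add_mul_eq_sum_esymm {ι R A : Type*} [Fintype ι] [CommSemiring R]
    [CommSemiring A] [Algebra R A] (x : A) (y : ι → A) :
    ∏ k, (1 + x * y k) =
      ∑ m ∈ range (Fintype.card ι + 1), x ^ m * aeval y (esymm ι R m) := by
  rw [prod_one_add, sum_powerset, card_univ]
  refine sum_congr rfl fun m _ => ?_
  rw [esymm, map_sum, mul_sum]
  refine sum_congr rfl fun s hs => ?_
  rw [prod_mul_distrib, prod_const, (mem_powersetCard.1 hs).2, map_prod]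
  simp only [aeval_X]

section Cauchy

variable {n N : ℕ} {R : Type} {A : Type*}

theorem coeff_sum_boxPartitions [CommSemiring A] {μ : Multiset ℕ} (hμ : ∀ i ∈ μ, 0 < i ∧ i ≤ N)
    {c : Multiset ℕ → A} (hc : μ ∉ boxPartitions n N → c μ = 0) :
    coeff (expOf N μ) (∑ κ ∈ boxPartitions n N, monomial (expOf N κ) (c κ)) = c μ := by
  rw [coeff_sum, sum_eq_single μ, coeff_monomial, if_pos rfl]
  · intro κ hκ hne
    rw [coeff_monomial, if_neg]
    exact fun h => hne (expOf_injOn N (pos_and_le_of_mem_boxPartitions hκ) hμ h)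
  · intro h
    rw [hc h, monomial_zero, coeff_zero]

variable (R) in
theorem prod_one_add_mul_eq_sum_msymmM [CommSemiring R] [CommSemiring A] [Algebra R A]
    (x : Fin n → A) (y : Fin N → A) :
    ∏ i, ∏ k, (1 + x i * y k) = ∑ μ ∈ boxPartitions n N,
      aeval x (msymmM n R μ) * aeval y (esymmHom N R (monomial (expOf N μ) 1)) := by
  have esymmHom_shape : ∀ d ∈ Fintype.piFinset fun _ : Fin n => range (N + 1),
      esymmHom N R (monomial (expOf N (shape d)) 1) = ∏ i, esymm (Fin N) R (d i) := fun d hd => by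
    rw [esymmHom_monomial_expOf R (pos_and_le_of_mem_boxPartitions (mem_image_of_mem _ hd)),
      prod_map_shape (esymm_zero _ _)]
  calc ∏ i, ∏ k, (1 + x i * y k)
    _ = ∑ d ∈ Fintype.piFinset fun _ : Fin n => range (N + 1),
          ∏ i, x i ^ d i * aeval y (esymm (Fin N) R (d i)) := by
      simp_rw [prod_one_add_mul_eq_sum_esymm (R := R), Fintype.card_fin, prod_univ_sum]
    _ = ∑ d ∈ Fintype.piFinset fun _ : Fin n => range (N + 1),
          aeval x (monomial (Finsupp.equivFunOnFinite.symm d) (1 : R)) *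
            aeval y (esymmHom N R (monomial (expOf N (shape d)) 1)) := by
      refine sum_congr rfl fun d hd => ?_
      rw [esymmHom_shape d hd, prod_mul_distrib, map_prod, aeval_monomial, map_one, one_mul,
        Finsupp.prod_fintype _ _ fun _ => pow_zero _]
      rfl
    _ = ∑ μ ∈ boxPartitions n N,
          aeval x (msymmM n R μ) * aeval y (esymmHom N R (monomial (expOf N μ) 1)) := by
      rw [← sum_fiberwise_of_maps_to fun d => mem_image_of_mem shape]
      refine sum_congr rfl fun μ hμ => ?_
      rw [msymmM_eq_sum fun i hi => (pos_and_le_of_mem_boxPartitions hμ i hi).2, map_sum, sum_mul]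
      exact sum_congr rfl fun d hd => by rw [(mem_filter.1 hd).2]

/-- The two expansions of `∏ (1 + x_i y_k)` are compared in `R[x][y]`. -/
theorem sum_monomial_msymmM_eq_sum_smul [CommRing R] {ψ : Multiset ℕ → MvPolynomial (Fin N) R}
    (hψ : ∀ ν, esymmHom N R (ψ ν) = msymmM N R ν) :
    ∑ κ ∈ boxPartitions n N, monomial (expOf N κ) (msymmM n R κ) =
      ∑ ν ∈ boxPartitions N n, esymmHom n R (monomial (expOf n ν) 1) •
        map (algebraMap R (MvPolynomial (Fin n) R)) (ψ ν) := by
  apply esymmHom_injective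
  let x (i : Fin n) : MvPolynomial (Fin N) (MvPolynomial (Fin n) R) := C (X i)
  have cauchy_y : ∏ k, ∏ i, (1 + X k * x i) = _ := prod_one_add_mul_eq_sum_msymmM R X x
  have h := (prod_one_add_mul_eq_sum_msymmM R x X).symm.trans (prod_comm.trans <| by
    simpa only [mul_comm (X _)] using cauchy_y)
  simp only [x, aeval_C_comp_X, aeval_X_eq_map, map_esymmHom, map_monomial, map_one, ← hψ] at h
  have monomial_eq (κ : Multiset ℕ) : monomial (expOf N κ) (msymmM n R κ) =
      msymmM n R κ • monomial (expOf N κ) 1 := by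
    rw [smul_monomial, smul_eq_mul, mul_one]
  simp only [monomial_eq, map_sum, map_smul]
  simpa only [smul_eq_C_mul, mul_comm (C _)] using h

theorem msymmM_eq_esymmHom_sum [CommRing R] {μ : Multiset ℕ} (hμ : ∀ i ∈ μ, 0 < i ∧ i ≤ N)
    {ψ : Multiset ℕ → MvPolynomial (Fin N) R} (hψ : ∀ ν, esymmHom N R (ψ ν) = msymmM N R ν) :
    msymmM n R μ = esymmHom n R
      (∑ ν ∈ boxPartitions N n, monomial (expOf n ν) (coeff (expOf N μ) (ψ ν))) := by
  have h := congrArg (coeff (expOf N μ)) (sum_monomial_msymmM_eq_sum_smul (n := n) hψ)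
  rw [coeff_sum_boxPartitions hμ fun h =>
    msymmM_eq_zero_of_notMem_boxPartitions (fun i hi => (hμ i hi).2) h] at h
  rw [h, coeff_sum, map_sum]
  refine sum_congr rfl fun ν _ => ?_
  rw [coeff_smul, coeff_map, smul_eq_mul, mul_comm, ← Algebra.smul_def, ← map_smul, smul_monomial,
    smul_eq_mul, mul_one]

theorem coeff_expOf_comm [CommRing R] {μ ν : Multiset ℕ} (hμ : ∀ i ∈ μ, 0 < i ∧ i ≤ N)
    (hν : ∀ i ∈ ν, 0 < i ∧ i ≤ n) {f : MvPolynomial (Fin n) R} {g : MvPolynomial (Fin N) R}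
    (hf : esymmHom n R f = msymmM n R μ) (hg : esymmHom N R g = msymmM N R ν) :
    coeff (expOf n ν) f = coeff (expOf N μ) g := by
  choose ψ hψ using fun κ => exists_esymmHom_eq (msymmM_isSymmetric (n := N) (R := R) κ)
  obtain rfl : g = ψ ν := esymmHom_injective N R (hg.trans (hψ ν).symm)
  rw [esymmHom_injective n R (hf.trans (msymmM_eq_esymmHom_sum hμ hψ)),
    coeff_sum_boxPartitions hν]
  intro h
  have hψν : ψ ν = 0 := esymmHom_injective N R <| by
    rw [hψ, msymmM_eq_zero_of_notMem_boxPartitions (fun i hi => (hν i hi).2) h, map_zero]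
  rw [hψν, coeff_zero]

end Cauchy

/-! ### Frobenius lifts -/

theorem mul_dvd_pow_sub_pow {A : Type*} [CommRing A] {p : ℕ} {a b c : A} (hp : (p : A) ∣ c)
    (h : c ∣ a - b) : p * c ∣ a ^ p - b ^ p := by
  rw [← (Commute.all a b).mul_geom_sum₂, mul_comm]
  exact mul_dvd_mul h ((dvd_geom_sum₂_iff_of_dvd_sub (hp.trans h)).2 (dvd_mul_right _ _))

/-- Write `φ f = f^p + p g`: the induction hypothesis for `f` gains a factor `p` from the `p`-th
power, and that for `g` gains one from the coefficient `p`. -/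
theorem pow_dvd_iterate_sub_of_frobenius_lift {A F G : Type*} [CommRing A] [FunLike F A A]
    [RingHomClass F A A] [FunLike G A A] [RingHomClass G A A] {p : ℕ} {φ : F} {σ : G}
    (hφ : ∀ f, (p : A) ∣ φ f - f ^ p) (hσ : ∀ f, (p : A) ∣ σ f - f ^ p) (s : ℕ) (f : A) :
    (p : A) ^ (s + 1) ∣ φ^[s + 1] f - σ (φ^[s] f) := by
  induction s generalizing f with
  | zero => simpa using dvd_sub (hφ f) (hσ f)
  | succ s ih =>
    obtain ⟨g, hg⟩ := hφ f
    have iterate_φ (k : ℕ) : φ^[k + 1] f = (φ^[k] f) ^ p + p * φ^[k] g := by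
      rw [Function.iterate_succ_apply, eq_add_of_sub_eq' hg, iterate_map_add, iterate_map_pow,
        iterate_map_mul, Function.iterate_fixed (map_natCast φ p)]
    have key : φ^[s + 1 + 1] f - σ (φ^[s + 1] f) =
        ((φ^[s + 1] f) ^ p - (σ (φ^[s] f)) ^ p) + p * (φ^[s + 1] g - σ (φ^[s] g)) := by
      rw [iterate_φ (s + 1), congrArg σ (iterate_φ s), map_add, map_mul, map_pow, map_natCast]
      ring
    rw [key, pow_succ' _ (s + 1)]
    exact dvd_add (mul_dvd_pow_sub_pow (dvd_pow_self _ s.succ_ne_zero) (ih f))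
      (mul_dvd_mul_left _ (ih g))

theorem natCast_dvd_iff_map_zmod {σ : Type*} {m : ℕ} {f : MvPolynomial σ ℤ} :
    (m : MvPolynomial σ ℤ) ∣ f ↔ map (Int.castRingHom (ZMod m)) f = 0 := by
  rw [← C_dvd_iff_zmod, map_natCast]

theorem dvd_expand_sub_pow {σ : Type*} {p : ℕ} (hp : p.Prime) (f : MvPolynomial σ ℤ) :
    (p : MvPolynomial σ ℤ) ∣ expand p f - f ^ p := by
  have := Fact.mk hp
  rw [natCast_dvd_iff_map_zmod, map_sub, map_pow, map_expand, expand_zmod, sub_self]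

section Iterate

variable {σ F : Type*} [FunLike F (MvPolynomial σ ℤ) (MvPolynomial σ ℤ)]
  [RingHomClass F (MvPolynomial σ ℤ) (MvPolynomial σ ℤ)] {p : ℕ} {φ : F}

/-- Compares `φ` with the Frobenius lift `X_i ↦ X_i^p`, which moves the coefficient at `c` to
`p • c`. -/
theorem coeff_smul_iterate_succ_modEq (hp : p.Prime)
    (hφ : ∀ f, (p : MvPolynomial σ ℤ) ∣ φ f - f ^ p) (f : MvPolynomial σ ℤ) (s : ℕ) (c : σ →₀ ℕ) :
    coeff (p • c) (φ^[s + 1] f) ≡ coeff c (φ^[s] f) [ZMOD (p : ℤ) ^ (s + 1)] := by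
  have h := pow_dvd_iterate_sub_of_frobenius_lift hφ (dvd_expand_sub_pow hp) s f
  rw [← map_natCast C p, ← map_pow, C_dvd_iff_dvd_coeff] at h
  have h := h (p • c)
  rw [coeff_sub, coeff_expand_smul _ hp.ne_zero] at h
  exact (Int.modEq_iff_dvd.2 h).symm

theorem coeff_pow_smul_iterate_modEq (hp : p.Prime)
    (hφ : ∀ f, (p : MvPolynomial σ ℤ) ∣ φ f - f ^ p) (f : MvPolynomial σ ℤ) (t j : ℕ)
    (c : σ →₀ ℕ) :
    coeff (p ^ j • c) (φ^[t + j] f) ≡ coeff c (φ^[t] f) [ZMOD (p : ℤ) ^ (t + 1)] := by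
  induction j with
  | zero => rw [pow_zero, one_smul, add_zero]
  | succ j ih =>
    have h := coeff_smul_iterate_succ_modEq hp hφ f (t + j) (p ^ j • c)
    rw [smul_smul, ← pow_succ'] at h
    exact (h.of_dvd (pow_dvd_pow _ (by omega))).trans ih

end Iterate

section EsymmExpand

variable {n : ℕ} {R : Type*} [CommRing R]

variable (n R) in
theorem exists_esymmHom_eq_expand_esymm (q i : ℕ) :
    ∃ g, esymmHom n R g = expand q (esymm (Fin n) R i) :=
  exists_esymmHom_eq fun e => by rw [rename_expand, rename_esymm]

variable (n R) in
/-- The substitution `f(x) ↦ f(x^q)` on symmetric polynomials, in the coordinates `e_1, …, e_n`. -/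
noncomputable def esymmExpand (q : ℕ) : MvPolynomial (Fin n) R →ₐ[R] MvPolynomial (Fin n) R :=
  aeval fun i => (exists_esymmHom_eq_expand_esymm n R q (i + 1)).choose

theorem esymmHom_esymmExpand (q : ℕ) (f : MvPolynomial (Fin n) R) :
    esymmHom n R (esymmExpand n R q f) = expand q (esymmHom n R f) := by
  suffices h : (esymmHom n R).comp (esymmExpand n R q) = (expand q).comp (esymmHom n R) from
    DFunLike.congr_fun h f
  ext1 i
  rw [AlgHom.comp_apply, esymmExpand, aeval_X,
    (exists_esymmHom_eq_expand_esymm n R q (i + 1)).choose_spec, AlgHom.comp_apply, esymmHom,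
    aeval_X]

theorem esymmHom_iterate_esymmExpand {n q : ℕ} {R : Type} [CommRing R] (hq : q ≠ 0)
    {f : MvPolynomial (Fin n) R} {μ : Multiset ℕ} (hf : esymmHom n R f = msymmM n R μ) (s : ℕ) :
    esymmHom n R ((esymmExpand n R q)^[s] f) = msymmM n R (μ.map (q ^ s * ·)) := by
  induction s with
  | zero => simp [hf]
  | succ s ih =>
    rw [Function.iterate_succ_apply', esymmHom_esymmExpand, ih, expand_msymmM hq, Multiset.map_map]
    simp only [Function.comp_def, pow_succ', mul_assoc]

theorem natCast_dvd_of_dvd_esymmHom {m : ℕ} {f : MvPolynomial (Fin n) ℤ}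
    (h : (m : MvPolynomial (Fin n) ℤ) ∣ esymmHom n ℤ f) : (m : MvPolynomial (Fin n) ℤ) ∣ f := by
  rw [natCast_dvd_iff_map_zmod] at h ⊢
  exact esymmHom_injective n _ (by rw [← map_esymmHom, h, map_zero])

theorem dvd_esymmExpand_sub_pow {p : ℕ} (hp : p.Prime) (f : MvPolynomial (Fin n) ℤ) :
    (p : MvPolynomial (Fin n) ℤ) ∣ esymmExpand n ℤ p f - f ^ p := by
  apply natCast_dvd_of_dvd_esymmHom
  rw [map_sub, map_pow, esymmHom_esymmExpand]
  exact dvd_expand_sub_pow hp _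

end EsymmExpand

end

theorem stmt9_general {p : ℕ} (hp : p.Prime) (j t : ℕ) {lam' μ' : Multiset ℕ}
    (hlpos : ∀ i ∈ lam', 0 < i) (hμpos : ∀ i ∈ μ', 0 < i) (hdvd : ∀ i ∈ lam', p ^ t ∣ i)
    {n : ℕ} (hlamle : ∀ i ∈ lam', p ^ j * i ≤ n) {ψ ψ' : MvPolynomial (Fin n) ℤ}
    (hψ : esymmHom n ℤ ψ = msymmM n ℤ (p ^ j • μ')) (hψ' : esymmHom n ℤ ψ' = msymmM n ℤ μ') :
    ψ.coeff (expOf n (lam'.map (p ^ j * ·))) ≡ ψ'.coeff (expOf n lam')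
      [ZMOD (p : ℤ) ^ (t + 1)] := by
  have hpj : 0 < p ^ j := pow_pos hp.pos j
  obtain ⟨κ, rfl⟩ : ∃ κ : Multiset ℕ, κ.map (p ^ t * ·) = lam' := by
    refine ⟨lam'.map (· / p ^ t), ?_⟩
    rw [Multiset.map_map]
    exact (Multiset.map_congr rfl fun i hi => Nat.mul_div_cancel' (hdvd i hi)).trans
      (Multiset.map_id' lam')
  let N := μ'.sum
  obtain ⟨f, hf⟩ := exists_esymmHom_eq (msymmM_isSymmetric (n := N) (R := ℤ) κ)
  have hf := esymmHom_iterate_esymmExpand hp.ne_zero hf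
  have hμN : ∀ i ∈ μ', 0 < i ∧ i ≤ N := fun i hi => ⟨hμpos i hi, Multiset.le_sum_of_mem hi⟩
  have hpμN : ∀ i ∈ p ^ j • μ', 0 < i ∧ i ≤ N := fun i hi => hμN i (Multiset.mem_of_mem_nsmul hi)
  have hln : ∀ i ∈ κ.map (p ^ t * ·), 0 < i ∧ i ≤ n := fun i hi =>
    ⟨hlpos i hi, (Nat.le_mul_of_pos_left i hpj).trans (hlamle i hi)⟩
  have hpln : ∀ i ∈ (κ.map (p ^ t * ·)).map (p ^ j * ·), 0 < i ∧ i ≤ n :=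
    Multiset.forall_mem_map_iff.2 fun i hi => ⟨Nat.mul_pos hpj (hlpos i hi), hlamle i hi⟩
  have hpf : esymmHom N ℤ ((esymmExpand N ℤ p)^[t + j] f) =
      msymmM N ℤ ((κ.map (p ^ t * ·)).map (p ^ j * ·)) := by
    simp only [hf, Multiset.map_map, Function.comp_def, add_comm t, pow_add, mul_assoc]
  rw [coeff_expOf_comm hμN hln hψ' (hf t), coeff_expOf_comm hpμN hpln hψ hpf, expOf_nsmul]
  exact coeff_pow_smul_iterate_modEq hp (dvd_esymmExpand_sub_pow hp) f t j _

theorem stmt9 (p : ℕ) (hp : p.Prime) (w' j t : ℕ) (hw' : 1 ≤ w') (hj : 1 ≤ j)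
    -- `λ'`, `μ'` are partitions of `w'`, with every part of `λ'` divisible by `p^t`
    (lam' μ' : Multiset ℕ)
    (hlpos : ∀ i ∈ lam', 0 < i) (hlsum : lam'.sum = w')
    (hμpos : ∀ i ∈ μ', 0 < i) (hμsum : μ'.sum = w')
    (hdvd : ∀ i ∈ lam', p ^ t ∣ i)
    (n : ℕ) (hn : w' * p ^ j ≤ n)
    (hlamle : ∀ i ∈ lam', p ^ j * i ≤ n)
    -- `ψ` is the unique polynomial with `m_{p^j·λ... μ} = ψ(e_1,…,e_n)` for `μ = p^j * μ'`,
    -- and `ψ'` the one for `μ'`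
    (ψ ψ' : MvPolynomial (Fin n) ℤ)
    (hψ : MvPolynomial.aeval (fun i : Fin n => MvPolynomial.esymm (Fin n) ℤ ((i : ℕ) + 1)) ψ =
      msymmM n ℤ (p ^ j • μ'))
    (hψ' : MvPolynomial.aeval (fun i : Fin n => MvPolynomial.esymm (Fin n) ℤ ((i : ℕ) + 1)) ψ' =
      msymmM n ℤ μ') :
    -- `d_{λμ} ≡ d_{λ'μ'} (mod p^(t+1))` where `λ = p^j·λ'` and `μ = p^j * μ'`
    ψ.coeff (expOf n (lam'.map fun i => p ^ j * i)) ≡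
      ψ'.coeff (expOf n lam') [ZMOD ((p : ℤ) ^ (t + 1))] :=
  stmt9_general hp j t hlpos hμpos hdvd hlamle hψ hψ'
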